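/- arXiv:1104.5295 — 2 statements merged into one kernel-verified Lean document; each statement's English description precedes it below -/
import Mathlib

section
/- Let r > 2 and let (X_i)_{i≥1} be a sequence of random variables on (Ω, 𝒜) that is IID under E̅, with E̅[X₁] = E̅[−X₁] = 0 and E̅[|X₁|^r] < ∞. Then sup_{n≥1} E̅[|S_n / √n|^r] < ∞. -/
open MeasureTheory Filter Topology

/-- Upper expectation `E̅[X] = sup_{P ∈ 𝒬} E_P[X]` of a set of probability measures. -/
noncomputable def upperExp {Ω : Type*} [MeasurableSpace Ω]
    (𝒬 : Set (Measure Ω)) (X : Ω → ℝ) : ℝ :=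
  sSup ((fun P : Measure Ω => ∫ ω, X ω ∂P) '' 𝒬)

/-- `E̅[X]` is finite: `X` is integrable under each `P ∈ 𝒬` and the
integrals are bounded above. -/
def HasFiniteUpperExp {Ω : Type*} [MeasurableSpace Ω]
    (𝒬 : Set (Measure Ω)) (X : Ω → ℝ) : Prop :=
  (∀ P ∈ 𝒬, Integrable X P) ∧ BddAbove ((fun P : Measure Ω => ∫ ω, X ω ∂P) '' 𝒬)

/-- Peng independence of a random variable `Y` from a random vector `X` under
the upper expectation associated with `𝒬`. -/
def PengIndep {Ω : Type*} [MeasurableSpace Ω]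
    (𝒬 : Set (Measure Ω)) {d : ℕ} (X : Ω → (Fin d → ℝ)) (Y : Ω → ℝ) : Prop :=
  ∀ φ : (Fin d → ℝ) → ℝ → ℝ,
    Measurable (fun p : (Fin d → ℝ) × ℝ => φ p.1 p.2) →
    HasFiniteUpperExp 𝒬 (fun ω => φ (X ω) (Y ω)) →
    (∀ x, HasFiniteUpperExp 𝒬 (fun ω => φ x (Y ω))) →
    HasFiniteUpperExp 𝒬 (fun ω => upperExp 𝒬 (fun ω' => φ (X ω) (Y ω'))) →
    upperExp 𝒬 (fun ω => φ (X ω) (Y ω)) =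
      upperExp 𝒬 (fun ω => upperExp 𝒬 (fun ω' => φ (X ω) (Y ω')))

/-- A sequence `(X_i)` is IID under the upper expectation: each `X_i` has the
same distribution as `X_0` (tested against measurable functions with finite
expectations) and `X_{i+1}` is Peng-independent of `(X_0, …, X_i)`. -/
def IsIIDUnder {Ω : Type*} [MeasurableSpace Ω]
    (𝒬 : Set (Measure Ω)) (X : ℕ → Ω → ℝ) : Prop :=
  (∀ i, ∀ φ : ℝ → ℝ, Measurable φ →
      HasFiniteUpperExp 𝒬 (fun ω => φ (X i ω)) →
      HasFiniteUpperExp 𝒬 (fun ω => φ (X 0 ω)) →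
      upperExp 𝒬 (fun ω => φ (X i ω)) = upperExp 𝒬 (fun ω => φ (X 0 ω))) ∧
  (∀ i : ℕ, PengIndep 𝒬 (fun ω (j : Fin (i + 1)) => X (j : ℕ) ω) (X (i + 1)))

/-- Partial sum `S_n = X_0 + ⋯ + X_{n-1}` (the first `n` variables). -/
def partialSum {Ω : Type*} (X : ℕ → Ω → ℝ) (n : ℕ) (ω : Ω) : ℝ :=
  ∑ i ∈ Finset.range n, X i ω

/-!
For `r ≥ 2`, second-order expansion gives
`|S + Y| ^ r ≤ |S| ^ r + r |S| ^ (r - 2) S Y + C (|S| ^ (r - 2) Y ^ 2 + |Y| ^ r)`.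
If `Y` is independent of `S` and has mean zero under every measure, the linear term has upper
expectation zero and that of `|S| ^ (r - 2) Y ^ 2` factorises; by Jensen's inequality the moments
`a n` of the partial sums satisfy `a (n + 1) ≤ a n + C (a n ^ (1 - 2 / r) * m ^ (2 / r) + m)`,
where `m` bounds the `r`-th moments of the summands. A multiple of `m * n ^ (r / 2)` is a
supersolution of this recursion. Identity in distribution only compares upper expectations already
known to be finite, so the moment condition is transferred from `X 0` to `X i` by truncation.
-/

theorem max_rpow_le_add_rpow {a b q : ℝ} (ha : 0 ≤ a) (hb : 0 ≤ b) (hq : 0 ≤ q) :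
    max a b ^ q ≤ a ^ q + b ^ q := by
  rw [Real.rpow_max ha hb hq]
  exact max_le_add_of_nonneg (by positivity) (by positivity)

theorem add_rpow_le_two_rpow_mul_add {a b q : ℝ} (ha : 0 ≤ a) (hb : 0 ≤ b) (hq : 0 ≤ q) :
    (a + b) ^ q ≤ 2 ^ q * (a ^ q + b ^ q) :=
  calc (a + b) ^ q ≤ (2 * max a b) ^ q := by
        rw [two_mul]; gcongr <;> simp
    _ = 2 ^ q * max a b ^ q := Real.mul_rpow zero_le_two (by positivity)
    _ ≤ 2 ^ q * (a ^ q + b ^ q) := by gcongr; exact max_rpow_le_add_rpow ha hb hq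

theorem rpow_mul_rpow_le_add_rpow_add {a b p q : ℝ} (ha : 0 ≤ a) (hb : 0 ≤ b) (hp : 0 ≤ p)
    (hq : 0 ≤ q) : a ^ p * b ^ q ≤ a ^ (p + q) + b ^ (p + q) :=
  calc a ^ p * b ^ q ≤ max a b ^ p * max a b ^ q := by gcongr <;> simp
    _ = max a b ^ (p + q) := (Real.rpow_add_of_nonneg (by positivity) hp hq).symm
    _ ≤ a ^ (p + q) + b ^ (p + q) := max_rpow_le_add_rpow ha hb (by positivity)

theorem hasDerivAt_abs_rpow_mul_self {q : ℝ} (hq : 0 ≤ q) (x : ℝ) :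
    HasDerivAt (fun u : ℝ => |u| ^ q * u) ((q + 1) * |x| ^ q) x := by
  rcases eq_or_ne x 0 with rfl | hx
  · have hcont : ContinuousAt (fun u : ℝ => |u| ^ q) 0 :=
      continuous_abs.continuousAt.rpow_const (Or.inr hq)
    have hvalue : (q + 1) * |(0 : ℝ)| ^ q = |0| ^ q := by
      rcases hq.eq_or_lt with rfl | hq <;> simp [*, Real.zero_rpow, ne_of_gt]
    rw [hvalue, hasDerivAt_iff_tendsto_slope]
    refine (hcont.mono_left nhdsWithin_le_nhds).congr' ?_
    filter_upwards [self_mem_nhdsWithin] with u hu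
    have hu : u ≠ 0 := hu
    simp [slope_def_field, hu]
  · have habs : |x| ≠ 0 := abs_ne_zero.2 hx
    refine (((hasDerivAt_abs hx).rpow_const (p := q) (Or.inl habs)).mul
      (hasDerivAt_id' x)).congr_deriv ?_
    calc (SignType.sign x : ℝ) * q * |x| ^ (q - 1) * x + |x| ^ q * 1
        = q * (|x| ^ (q - 1) * ((SignType.sign x : ℝ) * x)) + |x| ^ q := by ring
      _ = (q + 1) * |x| ^ q := by
        rw [sign_mul_self, Real.rpow_sub_one habs, div_mul_cancel₀ _ habs]; ring

theorem abs_abs_rpow_mul_self_sub_le {q M u v : ℝ} (hq : 0 ≤ q) (hu : |u| ≤ M) (hv : |v| ≤ M) :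
    |(|u| ^ q * u - |v| ^ q * v)| ≤ (q + 1) * M ^ q * |u - v| := by
  refine (convex_Icc (-M) M).norm_image_sub_le_of_norm_hasDerivWithin_le
    (fun x _ => (hasDerivAt_abs_rpow_mul_self hq x).hasDerivWithinAt) (fun x hx => ?_)
    (abs_le.1 hv) (abs_le.1 hu)
  rw [Real.norm_of_nonneg (by positivity)]
  gcongr
  exact abs_le.2 hx

theorem abs_abs_add_rpow_sub_le {r : ℝ} (hr : 2 ≤ r) (x y : ℝ) :
    |(|x + y| ^ r - |x| ^ r - r * (|x| ^ (r - 2) * x) * y)| ≤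
      r * (r - 1) * (|x| + |y|) ^ (r - 2) * y ^ 2 := by
  let g (u : ℝ) : ℝ := |u| ^ (r - 2) * u
  have hderiv (u : ℝ) : HasDerivAt (fun u => |u| ^ r - r * g x * u) (r * (g u - g x)) u := by
    have h := (hasDerivAt_abs_rpow u (by linarith : 1 < r)).sub
      ((hasDerivAt_id u).const_mul (r * g x))
    exact h.congr_deriv (by simp only [g]; ring)
  have hbound : ∀ u ∈ Set.uIcc x (x + y),
      ‖r * (g u - g x)‖ ≤ r * ((r - 1) * (|x| + |y|) ^ (r - 2) * |y|) := fun u hu => by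
    have hux : |u - x| ≤ |y| := by simpa using Set.abs_sub_left_of_mem_uIcc hu
    have hu_le : |u| ≤ |x| + |y| := by
      simpa using (abs_add_le x (u - x)).trans (by gcongr)
    rw [norm_mul, Real.norm_of_nonneg (by linarith), Real.norm_eq_abs]
    gcongr
    calc |g u - g x| ≤ (r - 2 + 1) * (|x| + |y|) ^ (r - 2) * |u - x| :=
          abs_abs_rpow_mul_self_sub_le (by linarith) hu_le (by simp)
      _ ≤ (r - 1) * (|x| + |y|) ^ (r - 2) * |y| := by
          rw [show r - 2 + 1 = r - 1 by ring]
          have : 0 ≤ r - 1 := by linarith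
          gcongr
  have hmvt := (convex_uIcc x (x + y)).norm_image_sub_le_of_norm_hasDerivWithin_le
    (fun u _ => (hderiv u).hasDerivWithinAt) hbound Set.left_mem_uIcc Set.right_mem_uIcc
  convert hmvt using 1
  · rw [Real.norm_eq_abs]
    congr 1
    ring
  · rw [add_sub_cancel_left, Real.norm_eq_abs, ← sq_abs y]
    ring

/-- The constant in the second-order expansion `abs_add_rpow_le` of `|x + y| ^ r`: `r * (r - 1)`
comes from the second derivative, `2 ^ (r - 2)` from splitting `(|x| + |y|) ^ (r - 2)` into a sum of
powers. -/
noncomputable def expansionConst (r : ℝ) : ℝ := r * (r - 1) * 2 ^ (r - 2)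

theorem one_le_expansionConst {r : ℝ} (hr : 2 ≤ r) : 1 ≤ expansionConst r :=
  one_le_mul_of_one_le_of_one_le (by nlinarith)
    (Real.one_le_rpow one_le_two (by linarith))

theorem abs_rpow_sub_two_mul_sq {r : ℝ} (hr : r ≠ 0) (y : ℝ) :
    |y| ^ (r - 2) * y ^ 2 = |y| ^ r := by
  rw [← sq_abs y, ← Real.rpow_two, ← Real.rpow_add' (abs_nonneg y) (by simpa using hr),
    sub_add_cancel]

theorem abs_add_rpow_le {r : ℝ} (hr : 2 ≤ r) (x y : ℝ) :
    |x + y| ^ r ≤ |x| ^ r + r * (|x| ^ (r - 2) * x * y) +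
      expansionConst r * (|x| ^ (r - 2) * y ^ 2 + |y| ^ r) := by
  have hr1 : 0 ≤ r - 1 := by linarith
  have hremainder : r * (r - 1) * (|x| + |y|) ^ (r - 2) * y ^ 2 ≤
      expansionConst r * (|x| ^ (r - 2) * y ^ 2 + |y| ^ r) :=
    calc r * (r - 1) * (|x| + |y|) ^ (r - 2) * y ^ 2
        ≤ r * (r - 1) * (2 ^ (r - 2) * (|x| ^ (r - 2) + |y| ^ (r - 2))) * y ^ 2 := by
          gcongr
          exact add_rpow_le_two_rpow_mul_add (abs_nonneg x) (abs_nonneg y) (by linarith)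
      _ = expansionConst r * (|x| ^ (r - 2) * y ^ 2 + |y| ^ r) := by
          rw [← abs_rpow_sub_two_mul_sq (by linarith : r ≠ 0) y, expansionConst]; ring
  linarith [(abs_le.1 (abs_abs_add_rpow_sub_le hr x y)).2]

theorem rpow_add_rpow_sub_one_le {N s : ℝ} (hN : 0 < N) (hs : 1 ≤ s) :
    N ^ s + N ^ (s - 1) ≤ (N + 1) ^ s :=
  calc N ^ s + N ^ (s - 1) = N ^ (s - 1) * (N + 1) := by
        rw [Real.rpow_sub_one hN.ne']; field_simp
    _ ≤ (N + 1) ^ (s - 1) * (N + 1) := by gcongr; linarith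
    _ = (N + 1) ^ s := by rw [Real.rpow_sub_one (by positivity)]; field_simp

theorem moment_recursion_le {s C m N : ℝ} (hs : 1 ≤ s) (hC : 1 ≤ C) (hm : 0 ≤ m)
    (hN : 1 ≤ N) :
    (2 * C) ^ s * m * N ^ s + C * (((2 * C) ^ s * m * N ^ s) ^ (1 - s⁻¹) * m ^ s⁻¹ + m) ≤
      (2 * C) ^ s * m * (N + 1) ^ s := by
  have hs0 : s ≠ 0 := by positivity
  have hs1 : s⁻¹ ≤ 1 := inv_le_one_of_one_le₀ hs
  have hsplit : s * (1 - s⁻¹) = s - 1 := by field_simp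
  have hpower : ((2 * C) ^ s * m * N ^ s) ^ (1 - s⁻¹) * m ^ s⁻¹ =
      (2 * C) ^ (s - 1) * m * N ^ (s - 1) := by
    rw [Real.mul_rpow (by positivity) (by positivity), Real.mul_rpow (by positivity) hm,
      ← Real.rpow_mul (by positivity), ← Real.rpow_mul (by positivity), hsplit,
      mul_right_comm, mul_assoc ((2 * C) ^ (s - 1)), ← Real.rpow_add_of_nonneg hm (by linarith)
      (by positivity), sub_add_cancel, Real.rpow_one]
  have hL : (2 * C) ^ s = 2 * C * (2 * C) ^ (s - 1) := by
    rw [Real.rpow_sub_one (by positivity)]; field_simp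
  have hC1 : 1 ≤ (2 * C) ^ (s - 1) := Real.one_le_rpow (by linarith) (by linarith)
  have hN1 : 1 ≤ N ^ (s - 1) := Real.one_le_rpow hN (by linarith)
  calc (2 * C) ^ s * m * N ^ s + C * (((2 * C) ^ s * m * N ^ s) ^ (1 - s⁻¹) * m ^ s⁻¹ + m)
      = (2 * C) ^ s * m * N ^ s + C * m * ((2 * C) ^ (s - 1) * N ^ (s - 1) + 1 * 1) := by
        rw [hpower]; ring
    _ ≤ (2 * C) ^ s * m * N ^ s +
          C * m * ((2 * C) ^ (s - 1) * N ^ (s - 1) + (2 * C) ^ (s - 1) * N ^ (s - 1)) := by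
        gcongr
    _ = (2 * C) ^ s * m * (N ^ s + N ^ (s - 1)) := by rw [hL]; ring
    _ ≤ (2 * C) ^ s * m * (N + 1) ^ s := by
        gcongr
        exact rpow_add_rpow_sub_one_le (by linarith) hs

theorem abs_div_sqrt_rpow (x r : ℝ) {t : ℝ} (ht : 0 ≤ t) :
    |x / √t| ^ r = (t ^ (r / 2))⁻¹ * |x| ^ r := by
  rw [abs_div, abs_of_nonneg (Real.sqrt_nonneg t),
    Real.div_rpow (abs_nonneg x) (Real.sqrt_nonneg t), Real.sqrt_eq_rpow,
    ← Real.rpow_mul ht, one_div_mul_eq_div, div_eq_inv_mul]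

theorem integrable_and_integral_le_of_integral_min_le {Ω : Type*} [MeasurableSpace Ω]
    {μ : Measure Ω} [IsFiniteMeasure μ] {f : Ω → ℝ} (hf : Measurable f) (hf0 : ∀ ω, 0 ≤ f ω)
    {c : ℝ} (hc : ∀ K : ℕ, ∫ ω, min (f ω) K ∂μ ≤ c) : Integrable f μ ∧ ∫ ω, f ω ∂μ ≤ c := by
  have hc0 : 0 ≤ c := by simpa [hf0] using hc 0
  have hmin0 (K : ℕ) (ω : Ω) : 0 ≤ min (f ω) (K : ℝ) := le_min (hf0 ω) K.cast_nonneg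
  have hmin_meas (K : ℕ) : Measurable fun ω => min (f ω) (K : ℝ) := hf.min measurable_const
  have htrunc (K : ℕ) : ∫⁻ ω, ENNReal.ofReal (min (f ω) K) ∂μ ≤ ENNReal.ofReal c := by
    have hint : Integrable (fun ω => min (f ω) (K : ℝ)) μ :=
      .of_bound (hmin_meas K).aestronglyMeasurable K
        (ae_of_all _ fun ω => (Real.norm_of_nonneg (hmin0 K ω)).trans_le (min_le_right _ _))
    rw [← ofReal_integral_eq_lintegral_ofReal hint (ae_of_all _ (hmin0 K))]
    exact ENNReal.ofReal_le_ofReal (hc K)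
  have hlim : Tendsto (fun K : ℕ => ∫⁻ ω, ENNReal.ofReal (min (f ω) K) ∂μ) atTop
      (𝓝 (∫⁻ ω, ENNReal.ofReal (f ω) ∂μ)) := by
    refine lintegral_tendsto_of_tendsto_of_monotone
      (fun K => (hmin_meas K).ennreal_ofReal.aemeasurable)
      (ae_of_all _ fun ω K L hKL =>
        ENNReal.ofReal_le_ofReal (min_le_min_left _ (Nat.cast_le.2 hKL)))
      (ae_of_all _ fun ω => ?_)
    refine tendsto_const_nhds.congr' ?_
    filter_upwards [eventually_ge_atTop ⌈f ω⌉₊] with K hK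
    rw [min_eq_left (Nat.ceil_le.1 hK)]
  have hlintegral := le_of_tendsto' hlim htrunc
  have hint : Integrable f μ := ⟨hf.aestronglyMeasurable, by
    rw [hasFiniteIntegral_iff_ofReal (ae_of_all _ hf0)]
    exact hlintegral.trans_lt ENNReal.ofReal_lt_top⟩
  rw [← ofReal_integral_eq_lintegral_ofReal hint (ae_of_all _ hf0),
    ENNReal.ofReal_le_ofReal_iff hc0] at hlintegral
  exact ⟨hint, hlintegral⟩

section UpperExpectation

variable {Ω : Type*} [MeasurableSpace Ω] {𝒬 : Set (Measure Ω)} {X Y : Ω → ℝ}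

theorem hasFiniteUpperExp_iff : HasFiniteUpperExp 𝒬 X ↔
    (∀ P ∈ 𝒬, Integrable X P) ∧ ∃ c, ∀ P ∈ 𝒬, ∫ ω, X ω ∂P ≤ c := by
  simp [HasFiniteUpperExp, bddAbove_def]

theorem hasFiniteUpperExp_const (hprob : ∀ P ∈ 𝒬, IsProbabilityMeasure P) (a : ℝ) :
    HasFiniteUpperExp 𝒬 (fun _ => a) :=
  hasFiniteUpperExp_iff.2 ⟨fun P hP => have := hprob P hP; integrable_const a,
    a, fun P hP => have := hprob P hP; by simp⟩

theorem hasFiniteUpperExp_of_integral_eq_zero (hX : ∀ P ∈ 𝒬, Integrable X P)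
    (h : ∀ P ∈ 𝒬, ∫ ω, X ω ∂P = 0) : HasFiniteUpperExp 𝒬 X :=
  hasFiniteUpperExp_iff.2 ⟨hX, 0, fun P hP => (h P hP).le⟩

namespace HasFiniteUpperExp

theorem integral_le_upperExp (hX : HasFiniteUpperExp 𝒬 X) {P : Measure Ω} (hP : P ∈ 𝒬) :
    ∫ ω, X ω ∂P ≤ upperExp 𝒬 X :=
  le_csSup hX.2 ⟨P, hP, rfl⟩

theorem of_abs_le (hX : HasFiniteUpperExp 𝒬 X) (hY : Measurable Y) (h : ∀ ω, |Y ω| ≤ X ω) :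
    HasFiniteUpperExp 𝒬 Y := by
  have hint : ∀ P ∈ 𝒬, Integrable Y P := fun P hP =>
    (hX.1 P hP).mono' hY.aestronglyMeasurable (ae_of_all _ h)
  exact hasFiniteUpperExp_iff.2 ⟨hint, upperExp 𝒬 X, fun P hP =>
    (integral_mono (hint P hP) (hX.1 P hP) fun ω => (le_abs_self _).trans (h ω)).trans
      (hX.integral_le_upperExp hP)⟩

theorem add (hX : HasFiniteUpperExp 𝒬 X) (hY : HasFiniteUpperExp 𝒬 Y) :
    HasFiniteUpperExp 𝒬 (fun ω => X ω + Y ω) := by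
  refine hasFiniteUpperExp_iff.2 ⟨fun P hP => (hX.1 P hP).add (hY.1 P hP),
    upperExp 𝒬 X + upperExp 𝒬 Y, fun P hP => ?_⟩
  rw [integral_add (hX.1 P hP) (hY.1 P hP)]
  exact add_le_add (hX.integral_le_upperExp hP) (hY.integral_le_upperExp hP)

theorem const_mul (hX : HasFiniteUpperExp 𝒬 X) {a : ℝ} (ha : 0 ≤ a) :
    HasFiniteUpperExp 𝒬 (fun ω => a * X ω) := by
  refine hasFiniteUpperExp_iff.2 ⟨fun P hP => (hX.1 P hP).const_mul a,
    a * upperExp 𝒬 X, fun P hP => ?_⟩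
  rw [integral_const_mul]
  exact mul_le_mul_of_nonneg_left (hX.integral_le_upperExp hP) ha

theorem integral_eq_zero (hX : HasFiniteUpperExp 𝒬 X)
    (hX' : HasFiniteUpperExp 𝒬 (fun ω => -X ω)) (hmean : upperExp 𝒬 X = 0)
    (hmean' : upperExp 𝒬 (fun ω => -X ω) = 0) {P : Measure Ω} (hP : P ∈ 𝒬) :
    ∫ ω, X ω ∂P = 0 := by
  have hle := hX.integral_le_upperExp hP
  have hge := hX'.integral_le_upperExp hP
  rw [integral_neg] at hge
  linarith

end HasFiniteUpperExp

theorem upperExp_le (h𝒬 : 𝒬.Nonempty) {c : ℝ} (h : ∀ P ∈ 𝒬, ∫ ω, X ω ∂P ≤ c) :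
    upperExp 𝒬 X ≤ c :=
  csSup_le (h𝒬.image _) (Set.forall_mem_image.2 h)

theorem upperExp_nonneg (hX : ∀ ω, 0 ≤ X ω) : 0 ≤ upperExp 𝒬 X :=
  Real.sSup_nonneg (Set.forall_mem_image.2 fun _ _ => integral_nonneg hX)

theorem upperExp_mono (h𝒬 : 𝒬.Nonempty) (hX : HasFiniteUpperExp 𝒬 X)
    (hY : HasFiniteUpperExp 𝒬 Y) (h : ∀ ω, X ω ≤ Y ω) : upperExp 𝒬 X ≤ upperExp 𝒬 Y :=
  upperExp_le h𝒬 fun P hP =>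
    (integral_mono (hX.1 P hP) (hY.1 P hP) h).trans (hY.integral_le_upperExp hP)

theorem upperExp_add_le (h𝒬 : 𝒬.Nonempty) (hX : HasFiniteUpperExp 𝒬 X)
    (hY : HasFiniteUpperExp 𝒬 Y) :
    upperExp 𝒬 (fun ω => X ω + Y ω) ≤ upperExp 𝒬 X + upperExp 𝒬 Y :=
  upperExp_le h𝒬 fun P hP => by
    rw [integral_add (hX.1 P hP) (hY.1 P hP)]
    exact add_le_add (hX.integral_le_upperExp hP) (hY.integral_le_upperExp hP)

theorem upperExp_const_mul {a : ℝ} (ha : 0 ≤ a) (X : Ω → ℝ) :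
    upperExp 𝒬 (fun ω => a * X ω) = a * upperExp 𝒬 X := by
  simp only [upperExp, integral_const_mul]
  rw [← smul_eq_mul, ← Real.sSup_smul_of_nonneg ha, ← Set.image_smul, Set.image_image]
  rfl

theorem upperExp_eq_zero_of_integral_eq_zero (h : ∀ P ∈ 𝒬, ∫ ω, X ω ∂P = 0) :
    upperExp 𝒬 X = 0 :=
  le_antisymm (Real.sSup_nonpos (Set.forall_mem_image.2 fun P hP => (h P hP).le))
    (Real.sSup_nonneg (Set.forall_mem_image.2 fun P hP => (h P hP).ge))

end UpperExpectation

section Moments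

variable {Ω : Type*} [MeasurableSpace Ω] {𝒬 : Set (Measure Ω)} {X Y : Ω → ℝ} {p q r : ℝ}

namespace HasFiniteUpperExp

theorem abs_rpow_mul_abs_rpow (hX : Measurable X) (hY : Measurable Y) (hp : 0 ≤ p) (hq : 0 ≤ q)
    (hXr : HasFiniteUpperExp 𝒬 (fun ω => |X ω| ^ (p + q)))
    (hYr : HasFiniteUpperExp 𝒬 (fun ω => |Y ω| ^ (p + q))) :
    HasFiniteUpperExp 𝒬 (fun ω => |X ω| ^ p * |Y ω| ^ q) := by
  refine (hXr.add hYr).of_abs_le (by fun_prop) fun ω => ?_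
  rw [abs_of_nonneg (by positivity)]
  exact rpow_mul_rpow_le_add_rpow_add (abs_nonneg _) (abs_nonneg _) hp hq

theorem abs_rpow_of_le (hprob : ∀ P ∈ 𝒬, IsProbabilityMeasure P) (hX : Measurable X)
    (hp : 0 ≤ p) (hpr : p ≤ r) (hXr : HasFiniteUpperExp 𝒬 (fun ω => |X ω| ^ r)) :
    HasFiniteUpperExp 𝒬 (fun ω => |X ω| ^ p) := by
  rw [← add_sub_cancel p r] at hXr
  simpa using abs_rpow_mul_abs_rpow hX (measurable_const (a := (1 : ℝ))) hp (sub_nonneg.2 hpr) hXr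
    (by simpa using hasFiniteUpperExp_const hprob 1)

theorem of_abs_rpow (hprob : ∀ P ∈ 𝒬, IsProbabilityMeasure P) (hX : Measurable X) (hr : 1 ≤ r)
    (hXr : HasFiniteUpperExp 𝒬 (fun ω => |X ω| ^ r)) : HasFiniteUpperExp 𝒬 X :=
  (hXr.abs_rpow_of_le hprob hX zero_le_one hr).of_abs_le hX fun _ => (Real.rpow_one _).ge

theorem neg_of_abs_rpow (hprob : ∀ P ∈ 𝒬, IsProbabilityMeasure P) (hX : Measurable X)
    (hr : 1 ≤ r) (hXr : HasFiniteUpperExp 𝒬 (fun ω => |X ω| ^ r)) :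
    HasFiniteUpperExp 𝒬 (fun ω => -X ω) :=
  of_abs_rpow hprob hX.neg hr (by simpa only [Pi.neg_apply, abs_neg] using hXr)

theorem abs_add_rpow (hX : Measurable X) (hY : Measurable Y) (hr : 0 ≤ r)
    (hXr : HasFiniteUpperExp 𝒬 (fun ω => |X ω| ^ r))
    (hYr : HasFiniteUpperExp 𝒬 (fun ω => |Y ω| ^ r)) :
    HasFiniteUpperExp 𝒬 (fun ω => |X ω + Y ω| ^ r) := by
  refine ((hXr.add hYr).const_mul (by positivity : (0 : ℝ) ≤ 2 ^ r)).of_abs_le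
    (by fun_prop) fun ω => ?_
  rw [abs_of_nonneg (by positivity)]
  calc |X ω + Y ω| ^ r ≤ (|X ω| + |Y ω|) ^ r := by gcongr; exact abs_add_le _ _
    _ ≤ 2 ^ r * (|X ω| ^ r + |Y ω| ^ r) :=
      add_rpow_le_two_rpow_mul_add (abs_nonneg _) (abs_nonneg _) hr

end HasFiniteUpperExp

theorem upperExp_abs_rpow_le (h𝒬 : 𝒬.Nonempty) (hprob : ∀ P ∈ 𝒬, IsProbabilityMeasure P)
    (hX : Measurable X) (hp : 0 ≤ p) (hr : 0 < r) (hpr : p ≤ r)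
    (hXr : HasFiniteUpperExp 𝒬 (fun ω => |X ω| ^ r)) :
    upperExp 𝒬 (fun ω => |X ω| ^ p) ≤ upperExp 𝒬 (fun ω => |X ω| ^ r) ^ (p / r) := by
  have hpow (ω : Ω) : (|X ω| ^ r) ^ (p / r) = |X ω| ^ p := by
    rw [← Real.rpow_mul (abs_nonneg _), mul_div_cancel₀ _ hr.ne']
  have hXp := hXr.abs_rpow_of_le hprob hX hp hpr
  refine upperExp_le h𝒬 fun P hP => ?_
  have := hprob P hP
  have hjensen : ∫ ω, (|X ω| ^ r) ^ (p / r) ∂P ≤ (∫ ω, |X ω| ^ r ∂P) ^ (p / r) :=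
    (Real.concaveOn_rpow (by positivity) ((div_le_one hr).2 hpr)).le_map_integral
      (Real.continuous_rpow_const (by positivity)).continuousOn isClosed_Ici
      (ae_of_all _ fun ω => Set.mem_Ici.2 (by positivity)) (hXr.1 P hP)
      (by simpa only [Function.comp_def, hpow] using hXp.1 P hP)
  simp only [hpow] at hjensen
  refine hjensen.trans (Real.rpow_le_rpow ?_ (hXr.integral_le_upperExp hP) (by positivity))
  exact integral_nonneg fun ω => by positivity

end Moments

namespace PengIndep

variable {Ω : Type*} [MeasurableSpace Ω] {𝒬 : Set (Measure Ω)} {d : ℕ} {Z : Ω → Fin d → ℝ}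
  {Y : Ω → ℝ}

theorem upperExp_mul (hZY : PengIndep 𝒬 Z Y) {h : (Fin d → ℝ) → ℝ} {k : ℝ → ℝ}
    (hh : Measurable h) (hk : Measurable k) (hh0 : ∀ z, 0 ≤ h z)
    (hk0 : 0 ≤ upperExp 𝒬 (fun ω => k (Y ω)))
    (hhZ : HasFiniteUpperExp 𝒬 (fun ω => h (Z ω))) (hkY : HasFiniteUpperExp 𝒬 (fun ω => k (Y ω)))
    (hprod : HasFiniteUpperExp 𝒬 (fun ω => h (Z ω) * k (Y ω))) :
    upperExp 𝒬 (fun ω => h (Z ω) * k (Y ω)) =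
      upperExp 𝒬 (fun ω => h (Z ω)) * upperExp 𝒬 (fun ω => k (Y ω)) := by
  have hinner (z : Fin d → ℝ) :
      upperExp 𝒬 (fun ω => h z * k (Y ω)) = upperExp 𝒬 (fun ω => k (Y ω)) * h z := by
    rw [upperExp_const_mul (hh0 z), mul_comm]
  rw [hZY (fun z y => h z * k y) (by fun_prop) hprod (fun z => hkY.const_mul (hh0 z))
    (by simpa only [hinner] using hhZ.const_mul hk0)]
  simp only [hinner]
  rw [upperExp_const_mul hk0, mul_comm]

theorem upperExp_mul_eq_zero (hZY : PengIndep 𝒬 Z Y) {h : (Fin d → ℝ) → ℝ} (hh : Measurable h)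
    (hY : ∀ P ∈ 𝒬, Integrable Y P) (hmean : ∀ P ∈ 𝒬, ∫ ω, Y ω ∂P = 0)
    (hprod : HasFiniteUpperExp 𝒬 (fun ω => h (Z ω) * Y ω)) :
    upperExp 𝒬 (fun ω => h (Z ω) * Y ω) = 0 := by
  have hintegral (z : Fin d → ℝ) : ∀ P ∈ 𝒬, ∫ ω, h z * Y ω ∂P = 0 := fun P hP => by
    rw [integral_const_mul, hmean P hP, mul_zero]
  have hinner (z : Fin d → ℝ) : upperExp 𝒬 (fun ω => h z * Y ω) = 0 :=
    upperExp_eq_zero_of_integral_eq_zero (hintegral z)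
  have hzero : ∀ P ∈ 𝒬, ∫ _, (0 : ℝ) ∂P = 0 := fun _ _ => integral_zero Ω ℝ
  rw [hZY (fun z y => h z * y) (by fun_prop) hprod
    (fun z => hasFiniteUpperExp_of_integral_eq_zero (fun P hP => (hY P hP).const_mul _)
      (hintegral z))
    (by
      simp only [hinner]
      exact hasFiniteUpperExp_of_integral_eq_zero (fun _ _ => integrable_zero Ω ℝ _) hzero)]
  simpa only [hinner] using upperExp_eq_zero_of_integral_eq_zero hzero

theorem upperExp_abs_rpow_mul_sq_le (hZY : PengIndep 𝒬 Z Y) (h𝒬 : 𝒬.Nonempty)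
    (hprob : ∀ P ∈ 𝒬, IsProbabilityMeasure P) (hZ : Measurable Z) (hY : Measurable Y)
    {f : (Fin d → ℝ) → ℝ} (hf : Measurable f) {r : ℝ} (hr : 2 ≤ r)
    (hfr : HasFiniteUpperExp 𝒬 (fun ω => |f (Z ω)| ^ r))
    (hYr : HasFiniteUpperExp 𝒬 (fun ω => |Y ω| ^ r)) :
    HasFiniteUpperExp 𝒬 (fun ω => |f (Z ω)| ^ (r - 2) * Y ω ^ 2) ∧
    upperExp 𝒬 (fun ω => |f (Z ω)| ^ (r - 2) * Y ω ^ 2) ≤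
      upperExp 𝒬 (fun ω => |f (Z ω)| ^ r) ^ (1 - 2 / r) *
        upperExp 𝒬 (fun ω => |Y ω| ^ r) ^ (2 / r) := by
  have hr2 : 0 ≤ r - 2 := sub_nonneg.2 hr
  have hr0 : 0 < r := by linarith
  have hfZ : Measurable fun ω => f (Z ω) := hf.comp hZ
  have hfin : HasFiniteUpperExp 𝒬 (fun ω => |f (Z ω)| ^ (r - 2) * |Y ω| ^ (2 : ℝ)) :=
    .abs_rpow_mul_abs_rpow hfZ hY hr2 zero_le_two (by rwa [sub_add_cancel])
      (by rwa [sub_add_cancel])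
  have hf_le := upperExp_abs_rpow_le h𝒬 hprob hfZ hr2 hr0 (by linarith) hfr
  have hY_le := upperExp_abs_rpow_le h𝒬 hprob hY zero_le_two hr0 hr hYr
  rw [sub_div, div_self hr0.ne'] at hf_le
  have hmul := hZY.upperExp_mul (h := fun z => |f z| ^ (r - 2)) (k := fun y => |y| ^ (2 : ℝ))
    (by fun_prop) (by fun_prop) (fun z => by positivity)
    (upperExp_nonneg fun ω => by positivity)
    (hfr.abs_rpow_of_le hprob hfZ hr2 (by linarith))
    (hYr.abs_rpow_of_le hprob hY zero_le_two hr) hfin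
  simp only [Real.rpow_two, sq_abs] at hfin hY_le hmul
  exact ⟨hfin, hmul.trans_le (mul_le_mul hf_le hY_le (upperExp_nonneg fun ω => sq_nonneg _)
    (Real.rpow_nonneg (upperExp_nonneg fun ω => by positivity) _))⟩

theorem upperExp_abs_rpow_mul_self_mul (hZY : PengIndep 𝒬 Z Y)
    (hprob : ∀ P ∈ 𝒬, IsProbabilityMeasure P) (hZ : Measurable Z) (hY : Measurable Y)
    (hmean : ∀ P ∈ 𝒬, ∫ ω, Y ω ∂P = 0)
    {f : (Fin d → ℝ) → ℝ} (hf : Measurable f) {r : ℝ} (hr : 2 ≤ r)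
    (hfr : HasFiniteUpperExp 𝒬 (fun ω => |f (Z ω)| ^ r))
    (hYr : HasFiniteUpperExp 𝒬 (fun ω => |Y ω| ^ r)) :
    HasFiniteUpperExp 𝒬 (fun ω => |f (Z ω)| ^ (r - 2) * f (Z ω) * Y ω) ∧
    upperExp 𝒬 (fun ω => |f (Z ω)| ^ (r - 2) * f (Z ω) * Y ω) = 0 := by
  have hfZ : Measurable fun ω => f (Z ω) := hf.comp hZ
  have hdom : HasFiniteUpperExp 𝒬 (fun ω => |f (Z ω)| ^ (r - 1) * |Y ω| ^ (1 : ℝ)) :=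
    .abs_rpow_mul_abs_rpow hfZ hY (by linarith) zero_le_one (by rwa [sub_add_cancel])
      (by rwa [sub_add_cancel])
  have hfin : HasFiniteUpperExp 𝒬 (fun ω => |f (Z ω)| ^ (r - 2) * f (Z ω) * Y ω) := by
    refine hdom.of_abs_le (by fun_prop) fun ω => ?_
    rw [abs_mul, abs_mul, abs_of_nonneg (by positivity : 0 ≤ |f (Z ω)| ^ (r - 2)), Real.rpow_one,
      ← Real.rpow_add_one' (abs_nonneg _) (by linarith), show r - 2 + 1 = r - 1 by ring]
  exact ⟨hfin, hZY.upperExp_mul_eq_zero (h := fun z => |f z| ^ (r - 2) * f z) (by fun_prop)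
    (hYr.of_abs_rpow hprob hY (by linarith)).1 hmean hfin⟩

theorem upperExp_abs_add_rpow_le (hZY : PengIndep 𝒬 Z Y) (h𝒬 : 𝒬.Nonempty)
    (hprob : ∀ P ∈ 𝒬, IsProbabilityMeasure P) (hZ : Measurable Z) (hY : Measurable Y)
    (hmean : ∀ P ∈ 𝒬, ∫ ω, Y ω ∂P = 0)
    {f : (Fin d → ℝ) → ℝ} (hf : Measurable f) {r : ℝ} (hr : 2 ≤ r)
    (hfr : HasFiniteUpperExp 𝒬 (fun ω => |f (Z ω)| ^ r))
    (hYr : HasFiniteUpperExp 𝒬 (fun ω => |Y ω| ^ r)) :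
    upperExp 𝒬 (fun ω => |f (Z ω) + Y ω| ^ r) ≤ upperExp 𝒬 (fun ω => |f (Z ω)| ^ r) +
      expansionConst r * (upperExp 𝒬 (fun ω => |f (Z ω)| ^ r) ^ (1 - 2 / r) *
        upperExp 𝒬 (fun ω => |Y ω| ^ r) ^ (2 / r) + upperExp 𝒬 (fun ω => |Y ω| ^ r)) := by
  have hr0 : 0 ≤ r := by linarith
  have hC : 0 ≤ expansionConst r := zero_le_one.trans (one_le_expansionConst hr)
  obtain ⟨hlin, hlin_eq⟩ := hZY.upperExp_abs_rpow_mul_self_mul hprob hZ hY hmean hf hr hfr hYr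
  obtain ⟨hsq, hsq_le⟩ := hZY.upperExp_abs_rpow_mul_sq_le h𝒬 hprob hZ hY hf hr hfr hYr
  have hmain := hfr.add (hlin.const_mul hr0)
  have hrem := (hsq.add hYr).const_mul hC
  calc upperExp 𝒬 (fun ω => |f (Z ω) + Y ω| ^ r)
      ≤ upperExp 𝒬 (fun ω => |f (Z ω)| ^ r + r * (|f (Z ω)| ^ (r - 2) * f (Z ω) * Y ω) +
          expansionConst r * (|f (Z ω)| ^ (r - 2) * Y ω ^ 2 + |Y ω| ^ r)) :=
        upperExp_mono h𝒬 (.abs_add_rpow (hf.comp hZ) hY hr0 hfr hYr) (hmain.add hrem)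
          fun ω => abs_add_rpow_le hr _ _
    _ ≤ upperExp 𝒬 (fun ω => |f (Z ω)| ^ r) +
          r * upperExp 𝒬 (fun ω => |f (Z ω)| ^ (r - 2) * f (Z ω) * Y ω) +
          expansionConst r * (upperExp 𝒬 (fun ω => |f (Z ω)| ^ (r - 2) * Y ω ^ 2) +
            upperExp 𝒬 (fun ω => |Y ω| ^ r)) := by
        refine (upperExp_add_le h𝒬 hmain hrem).trans (add_le_add ?_ ?_)
        · exact (upperExp_add_le h𝒬 hfr (hlin.const_mul hr0)).trans_eq
            (by rw [upperExp_const_mul hr0])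
        · rw [upperExp_const_mul hC]
          exact mul_le_mul_of_nonneg_left (upperExp_add_le h𝒬 hsq hYr) hC
    _ ≤ _ := by
        rw [hlin_eq, mul_zero, add_zero]
        gcongr

end PengIndep

namespace IsIIDUnder

variable {Ω : Type*} [MeasurableSpace Ω] {𝒬 : Set (Measure Ω)} {X : ℕ → Ω → ℝ}

theorem hasFiniteUpperExp_comp (hiid : IsIIDUnder 𝒬 X) (h𝒬 : 𝒬.Nonempty)
    (hprob : ∀ P ∈ 𝒬, IsProbabilityMeasure P) (hmeas : ∀ i, Measurable (X i)) {φ : ℝ → ℝ}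
    (hφ : Measurable φ) (hφ0 : ∀ x, 0 ≤ φ x) (hfin : HasFiniteUpperExp 𝒬 (fun ω => φ (X 0 ω)))
    (i : ℕ) : HasFiniteUpperExp 𝒬 (fun ω => φ (X i ω)) := by
  have htrunc (K j : ℕ) : HasFiniteUpperExp 𝒬 (fun ω => min (φ (X j ω)) (K : ℝ)) := by
    refine (hasFiniteUpperExp_const hprob (K : ℝ)).of_abs_le
      ((hφ.comp (hmeas j)).min measurable_const) fun ω => ?_
    rw [abs_of_nonneg (le_min (hφ0 _) K.cast_nonneg)]
    exact min_le_right _ _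
  have hbound : ∀ P ∈ 𝒬, ∀ K : ℕ,
      ∫ ω, min (φ (X i ω)) (K : ℝ) ∂P ≤ upperExp 𝒬 (fun ω => φ (X 0 ω)) := fun P hP K =>
    calc ∫ ω, min (φ (X i ω)) (K : ℝ) ∂P
        ≤ upperExp 𝒬 (fun ω => min (φ (X i ω)) (K : ℝ)) := (htrunc K i).integral_le_upperExp hP
      _ = upperExp 𝒬 (fun ω => min (φ (X 0 ω)) (K : ℝ)) :=
        hiid.1 i (fun x => min (φ x) K) (hφ.min measurable_const) (htrunc K i) (htrunc K 0)
      _ ≤ upperExp 𝒬 (fun ω => φ (X 0 ω)) :=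
        upperExp_mono h𝒬 (htrunc K 0) hfin fun ω => min_le_left _ _
  have hlimit : ∀ P ∈ 𝒬, Integrable (fun ω => φ (X i ω)) P ∧
      ∫ ω, φ (X i ω) ∂P ≤ upperExp 𝒬 (fun ω => φ (X 0 ω)) := fun P hP =>
    have := hprob P hP
    integrable_and_integral_le_of_integral_min_le (hφ.comp (hmeas i)) (fun ω => hφ0 _)
      (hbound P hP)
  exact hasFiniteUpperExp_iff.2
    ⟨fun P hP => (hlimit P hP).1, _, fun P hP => (hlimit P hP).2⟩

theorem upperExp_eq (hiid : IsIIDUnder 𝒬 X) (hprob : ∀ P ∈ 𝒬, IsProbabilityMeasure P)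
    (hmeas : ∀ i, Measurable (X i)) {r : ℝ} (hr : 1 ≤ r)
    (hmom : ∀ i, HasFiniteUpperExp 𝒬 (fun ω => |X i ω| ^ r)) (i : ℕ) :
    upperExp 𝒬 (X i) = upperExp 𝒬 (X 0) :=
  hiid.1 i id measurable_id ((hmom i).of_abs_rpow hprob (hmeas i) hr)
    ((hmom 0).of_abs_rpow hprob (hmeas 0) hr)

theorem upperExp_neg_eq (hiid : IsIIDUnder 𝒬 X) (hprob : ∀ P ∈ 𝒬, IsProbabilityMeasure P)
    (hmeas : ∀ i, Measurable (X i)) {r : ℝ} (hr : 1 ≤ r)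
    (hmom : ∀ i, HasFiniteUpperExp 𝒬 (fun ω => |X i ω| ^ r)) (i : ℕ) :
    upperExp 𝒬 (fun ω => -X i ω) = upperExp 𝒬 (fun ω => -X 0 ω) :=
  hiid.1 i (fun x => -x) measurable_neg ((hmom i).neg_of_abs_rpow hprob (hmeas i) hr)
    ((hmom 0).neg_of_abs_rpow hprob (hmeas 0) hr)

end IsIIDUnder

section PartialSum

theorem partialSum_eq_sum_fin {Ω : Type*} (X : ℕ → Ω → ℝ) (n : ℕ) (ω : Ω) :
    partialSum X n ω = ∑ j : Fin n, X j ω :=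
  (Fin.sum_univ_eq_sum_range (fun i => X i ω) n).symm

theorem partialSum_succ {Ω : Type*} (X : ℕ → Ω → ℝ) (n : ℕ) (ω : Ω) :
    partialSum X (n + 1) ω = partialSum X n ω + X n ω :=
  Finset.sum_range_succ _ _

variable {Ω : Type*} [MeasurableSpace Ω] {𝒬 : Set (Measure Ω)} {X : ℕ → Ω → ℝ} {r m : ℝ}

theorem measurable_partialSum (hmeas : ∀ i, Measurable (X i)) (n : ℕ) :
    Measurable (partialSum X n) :=
  Finset.measurable_fun_sum _ fun i _ => hmeas i

theorem hasFiniteUpperExp_abs_partialSum_rpow (hprob : ∀ P ∈ 𝒬, IsProbabilityMeasure P)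
    (hmeas : ∀ i, Measurable (X i)) (hr : 0 ≤ r)
    (hmom : ∀ i, HasFiniteUpperExp 𝒬 (fun ω => |X i ω| ^ r)) (n : ℕ) :
    HasFiniteUpperExp 𝒬 (fun ω => |partialSum X n ω| ^ r) := by
  induction n with
  | zero => simpa [partialSum] using hasFiniteUpperExp_const hprob (0 ^ r)
  | succ n ih =>
    simpa only [partialSum_succ] using
      ih.abs_add_rpow (measurable_partialSum hmeas n) (hmeas n) hr (hmom n)

theorem upperExp_abs_partialSum_rpow_le (h𝒬 : 𝒬.Nonempty)
    (hprob : ∀ P ∈ 𝒬, IsProbabilityMeasure P) (hmeas : ∀ i, Measurable (X i))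
    (hindep : ∀ i, PengIndep 𝒬 (fun ω (j : Fin (i + 1)) => X j ω) (X (i + 1)))
    (hr : 2 ≤ r) (hmean : ∀ i, ∀ P ∈ 𝒬, ∫ ω, X i ω ∂P = 0)
    (hmom : ∀ i, HasFiniteUpperExp 𝒬 (fun ω => |X i ω| ^ r))
    (hm : ∀ i, upperExp 𝒬 (fun ω => |X i ω| ^ r) ≤ m) {n : ℕ} (hn : 1 ≤ n) :
    upperExp 𝒬 (fun ω => |partialSum X n ω| ^ r) ≤
      (2 * expansionConst r) ^ (r / 2) * m * (n : ℝ) ^ (r / 2) := by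
  have hC := one_le_expansionConst hr
  have hm0 : 0 ≤ m := (upperExp_nonneg fun ω => by positivity).trans (hm 0)
  have hr1 : 0 ≤ 1 - 2 / r := sub_nonneg.2 ((div_le_one (by linarith)).2 hr)
  induction n, hn using Nat.le_induction with
  | base =>
    have hL : 1 ≤ (2 * expansionConst r) ^ (r / 2) :=
      Real.one_le_rpow (by linarith) (by linarith)
    simpa [partialSum] using (hm 0).trans (le_mul_of_one_le_left hm0 hL)
  | succ n hn ih =>
    obtain ⟨k, rfl⟩ := Nat.exists_eq_add_of_le' hn
    have hfin := hasFiniteUpperExp_abs_partialSum_rpow hprob hmeas (by linarith) hmom (k + 1)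
    have hstep := (hindep k).upperExp_abs_add_rpow_le h𝒬 hprob
      (measurable_pi_lambda _ fun j => hmeas j) (hmeas (k + 1)) (hmean (k + 1))
      (f := fun z => ∑ j, z j) (by fun_prop) hr
      (by simpa only [partialSum_eq_sum_fin] using hfin) (hmom (k + 1))
    simp only [← partialSum_eq_sum_fin, ← partialSum_succ] at hstep
    have hgrowth := moment_recursion_le (s := r / 2) (N := (k + 1 : ℕ)) (by linarith) hC hm0
      (by exact_mod_cast hn)
    rw [inv_div] at hgrowth
    rw [Nat.cast_add_one (k + 1)]
    refine hstep.trans (le_trans ?_ hgrowth)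
    have hS0 : 0 ≤ upperExp 𝒬 (fun ω => |partialSum X (k + 1) ω| ^ r) :=
      upperExp_nonneg fun ω => by positivity
    have hX0 : 0 ≤ upperExp 𝒬 (fun ω => |X (k + 1) ω| ^ r) :=
      upperExp_nonneg fun ω => by positivity
    gcongr <;> apply hm

end PartialSum

theorem sup_upperExp_normalized_moment_lt_top_general {Ω : Type*} [MeasurableSpace Ω]
    {𝒬 : Set (Measure Ω)} (h𝒬 : 𝒬.Nonempty)
    (hprob : ∀ P ∈ 𝒬, IsProbabilityMeasure P)
    {X : ℕ → Ω → ℝ} (hmeas : ∀ i, Measurable (X i))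
    (hindep : ∀ i, PengIndep 𝒬 (fun ω (j : Fin (i + 1)) => X j ω) (X (i + 1)))
    {r m : ℝ} (hr : 2 ≤ r)
    (hmean : ∀ i, upperExp 𝒬 (X i) = 0)
    (hmean' : ∀ i, upperExp 𝒬 (fun ω => -X i ω) = 0)
    (hmom : ∀ i, HasFiniteUpperExp 𝒬 (fun ω => |X i ω| ^ r))
    (hm : ∀ i, upperExp 𝒬 (fun ω => |X i ω| ^ r) ≤ m) {n : ℕ} (hn : 1 ≤ n) :
    HasFiniteUpperExp 𝒬 (fun ω => |partialSum X n ω / √n| ^ r) ∧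
    upperExp 𝒬 (fun ω => |partialSum X n ω / √n| ^ r) ≤ (2 * expansionConst r) ^ (r / 2) * m := by
  have hr0 : 0 ≤ r := by linarith
  have hr1 : 1 ≤ r := by linarith
  have hmean_P : ∀ i, ∀ P ∈ 𝒬, ∫ ω, X i ω ∂P = 0 := fun i _ hP =>
    ((hmom i).of_abs_rpow hprob (hmeas i) hr1).integral_eq_zero
      ((hmom i).neg_of_abs_rpow hprob (hmeas i) hr1) (hmean i) (hmean' i) hP
  have hn0 : 0 < (n : ℝ) ^ (r / 2) := Real.rpow_pos_of_pos (Nat.cast_pos.2 hn) _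
  simp only [abs_div_sqrt_rpow _ r n.cast_nonneg]
  refine ⟨(hasFiniteUpperExp_abs_partialSum_rpow hprob hmeas hr0 hmom n).const_mul
    (by positivity), ?_⟩
  rw [upperExp_const_mul (by positivity), inv_mul_le_iff₀ hn0, mul_comm]
  exact upperExp_abs_partialSum_rpow_le h𝒬 hprob hmeas hindep hr hmean_P hmom hm hn

/-- For a centered IID sequence under the upper expectation with `E̅[|X_1|^r] < ∞`
for some `r > 2`, the normalized sums have uniformly bounded `r`-th moments:
`sup_{n ≥ 1} E̅[|S_n/√n|^r] < ∞`. -/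
theorem sup_upperExp_normalized_moment_lt_top {Ω : Type*} [MeasurableSpace Ω]
    (𝒬 : Set (Measure Ω)) (h𝒬 : 𝒬.Nonempty)
    (hprob : ∀ P ∈ 𝒬, IsProbabilityMeasure P)
    (X : ℕ → Ω → ℝ) (hmeas : ∀ i, Measurable (X i))
    (hiid : IsIIDUnder 𝒬 X)
    (r : ℝ) (hr : 2 < r)
    (hmean : upperExp 𝒬 (X 0) = 0)
    (hmean' : upperExp 𝒬 (fun ω => -X 0 ω) = 0)
    (hmom : HasFiniteUpperExp 𝒬 (fun ω => |X 0 ω| ^ r)) :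
    ∃ M : ℝ, ∀ n : ℕ, 1 ≤ n →
      HasFiniteUpperExp 𝒬 (fun ω => |partialSum X n ω / Real.sqrt n| ^ r) ∧
      upperExp 𝒬 (fun ω => |partialSum X n ω / Real.sqrt n| ^ r) ≤ M := by
  have hmom' : ∀ i, HasFiniteUpperExp 𝒬 (fun ω => |X i ω| ^ r) :=
    hiid.hasFiniteUpperExp_comp h𝒬 hprob hmeas (φ := fun x => |x| ^ r) (by fun_prop)
      (fun _ => by positivity) hmom
  have hr1 : 1 ≤ r := by linarith
  exact ⟨_, fun n hn => sup_upperExp_normalized_moment_lt_top_general h𝒬 hprob hmeas hiid.2 hr.le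
    (fun i => (hiid.upperExp_eq hprob hmeas hr1 hmom' i).trans hmean)
    (fun i => (hiid.upperExp_neg_eq hprob hmeas hr1 hmom' i).trans hmean') hmom'
    (fun i => (hiid.1 i (fun x => |x| ^ r) (by fun_prop) (hmom' i) hmom).le) hn⟩
end

section
/- Let θ be a natural number with θ ≥ 2, let γ ∈ (0,1), set r = θ + γ, and let X, Y be random variables on (Ω, 𝒜) with E̅[|X| · |Y|^{θ−1+γ}], E̅[|Y|^{(θ−γ(θ−1+γ))/(1−γ)}] and E̅[|Y|^r] finite. If a ≥ 0 is any real number with E̅[|Y|^{(θ−γ(θ−1+γ))/(1−γ)}] ≤ a, then E̅[|X|^γ · |Y|^θ] ≤ a^{1−γ} · (E̅[|X| · |Y|^{θ−1+γ}])^γ. -/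
open MeasureTheory Filter Topology

/-!
The exponent `(θ - γ * (θ - 1 + γ)) / (1 - γ)` is the `t` for which
`|X| ^ γ * |Y| ^ θ = (|X| * |Y| ^ (θ - 1 + γ)) ^ γ * (|Y| ^ t) ^ (1 - γ)`; it equals `θ + γ`.
Hölder's inequality under each `P ∈ 𝒬` then bounds the expectation of the left-hand side by
a product of powers of `P`-expectations, and each factor is at most its supremum over `𝒬`.
-/

section Holder

variable {α : Type*} [MeasurableSpace α] {μ : Measure α} {f g : α → ℝ} {p q : ℝ}

theorem integrable_rpow_mul_rpow (hp : 0 ≤ p) (hq : 0 ≤ q) (hpq : p + q = 1)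
    (hf₀ : 0 ≤ᵐ[μ] f) (hg₀ : 0 ≤ᵐ[μ] g) (hf : Integrable f μ) (hg : Integrable g μ) :
    Integrable (fun x => f x ^ p * g x ^ q) μ := by
  have hmeas : AEStronglyMeasurable (fun x => f x ^ p * g x ^ q) μ :=
    ((hf.aemeasurable.pow_const p).mul (hg.aemeasurable.pow_const q)).aestronglyMeasurable
  refine ((hf.const_mul p).add (hg.const_mul q)).mono' hmeas ?_
  filter_upwards [hf₀, hg₀] with x hfx hgx
  rw [Real.norm_of_nonneg (mul_nonneg (Real.rpow_nonneg hfx p) (Real.rpow_nonneg hgx q))]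
  exact Real.geom_mean_le_arith_mean2_weighted hp hq hfx hgx hpq

theorem integral_rpow_mul_rpow_le (hp : 0 ≤ p) (hq : 0 ≤ q) (hpq : p + q = 1)
    (hf₀ : 0 ≤ᵐ[μ] f) (hg₀ : 0 ≤ᵐ[μ] g) (hf : Integrable f μ) (hg : Integrable g μ) :
    ∫ x, f x ^ p * g x ^ q ∂μ ≤ (∫ x, f x ∂μ) ^ p * (∫ x, g x ∂μ) ^ q := by
  have hIf : 0 ≤ ∫ x, f x ∂μ := integral_nonneg_of_ae hf₀
  have hIg : 0 ≤ ∫ x, g x ∂μ := integral_nonneg_of_ae hg₀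
  have hfg₀ : 0 ≤ᵐ[μ] fun x => f x ^ p * g x ^ q := by
    filter_upwards [hf₀, hg₀] with x hfx hgx
    exact mul_nonneg (Real.rpow_nonneg hfx p) (Real.rpow_nonneg hgx q)
  have hfg := integrable_rpow_mul_rpow hp hq hpq hf₀ hg₀ hf hg
  refine (ENNReal.ofReal_le_ofReal_iff (by positivity)).mp ?_
  calc ENNReal.ofReal (∫ x, f x ^ p * g x ^ q ∂μ)
      = ∫⁻ x, ENNReal.ofReal (f x ^ p * g x ^ q) ∂μ :=
        ofReal_integral_eq_lintegral_ofReal hfg hfg₀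
    _ = ∫⁻ x, ENNReal.ofReal (f x) ^ p * ENNReal.ofReal (g x) ^ q ∂μ := by
        refine lintegral_congr_ae ?_
        filter_upwards [hf₀, hg₀] with x hfx hgx
        rw [ENNReal.ofReal_mul (Real.rpow_nonneg hfx p), ENNReal.ofReal_rpow_of_nonneg hfx hp,
          ENNReal.ofReal_rpow_of_nonneg hgx hq]
    _ ≤ (∫⁻ x, ENNReal.ofReal (f x) ∂μ) ^ p * (∫⁻ x, ENNReal.ofReal (g x) ∂μ) ^ q :=
        ENNReal.lintegral_mul_norm_pow_le hf.aemeasurable.ennreal_ofReal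
          hg.aemeasurable.ennreal_ofReal hp hq hpq
    _ = ENNReal.ofReal ((∫ x, f x ∂μ) ^ p * (∫ x, g x ∂μ) ^ q) := by
        rw [← ofReal_integral_eq_lintegral_ofReal hf hf₀,
          ← ofReal_integral_eq_lintegral_ofReal hg hg₀, ENNReal.ofReal_rpow_of_nonneg hIf hp,
          ENNReal.ofReal_rpow_of_nonneg hIg hq, ENNReal.ofReal_mul (Real.rpow_nonneg hIf p)]

end Holder

section UpperExpectation

variable {Ω : Type*} [MeasurableSpace Ω] {𝒬 : Set (Measure Ω)} {F G : Ω → ℝ} {p q : ℝ}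

theorem upperExp_nonneg_s16 (hF : 0 ≤ F) : 0 ≤ upperExp 𝒬 F :=
  Real.sSup_nonneg (Set.forall_mem_image.mpr fun _ _ => integral_nonneg hF)

theorem HasFiniteUpperExp.integral_le_upperExp_s16 (hF : HasFiniteUpperExp 𝒬 F)
    {P : Measure Ω} (hP : P ∈ 𝒬) : ∫ ω, F ω ∂P ≤ upperExp 𝒬 F :=
  le_csSup hF.2 (Set.mem_image_of_mem _ hP)

theorem integral_rpow_mul_rpow_le_upperExp (hp : 0 ≤ p) (hq : 0 ≤ q) (hpq : p + q = 1)
    (hF₀ : 0 ≤ F) (hG₀ : 0 ≤ G) (hF : HasFiniteUpperExp 𝒬 F) (hG : HasFiniteUpperExp 𝒬 G)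
    {P : Measure Ω} (hP : P ∈ 𝒬) :
    ∫ ω, F ω ^ p * G ω ^ q ∂P ≤ upperExp 𝒬 F ^ p * upperExp 𝒬 G ^ q := by
  have hIF : 0 ≤ ∫ ω, F ω ∂P := integral_nonneg hF₀
  have hIG : 0 ≤ ∫ ω, G ω ∂P := integral_nonneg hG₀
  have hEF : 0 ≤ upperExp 𝒬 F := upperExp_nonneg_s16 hF₀
  calc ∫ ω, F ω ^ p * G ω ^ q ∂P
      ≤ (∫ ω, F ω ∂P) ^ p * (∫ ω, G ω ∂P) ^ q :=
        integral_rpow_mul_rpow_le hp hq hpq (.of_forall hF₀) (.of_forall hG₀)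
          (hF.1 P hP) (hG.1 P hP)
    _ ≤ upperExp 𝒬 F ^ p * upperExp 𝒬 G ^ q := by
        gcongr
        · exact hF.integral_le_upperExp_s16 hP
        · exact hG.integral_le_upperExp_s16 hP

theorem HasFiniteUpperExp.rpow_mul_rpow (hp : 0 ≤ p) (hq : 0 ≤ q) (hpq : p + q = 1)
    (hF₀ : 0 ≤ F) (hG₀ : 0 ≤ G) (hF : HasFiniteUpperExp 𝒬 F) (hG : HasFiniteUpperExp 𝒬 G) :
    HasFiniteUpperExp 𝒬 (fun ω => F ω ^ p * G ω ^ q) :=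
  ⟨fun P hP => integrable_rpow_mul_rpow hp hq hpq (.of_forall hF₀) (.of_forall hG₀)
      (hF.1 P hP) (hG.1 P hP),
    _, Set.forall_mem_image.mpr fun _ hP =>
      integral_rpow_mul_rpow_le_upperExp hp hq hpq hF₀ hG₀ hF hG hP⟩

theorem upperExp_rpow_mul_rpow_le (h𝒬 : 𝒬.Nonempty) (hp : 0 ≤ p) (hq : 0 ≤ q)
    (hpq : p + q = 1) (hF₀ : 0 ≤ F) (hG₀ : 0 ≤ G)
    (hF : HasFiniteUpperExp 𝒬 F) (hG : HasFiniteUpperExp 𝒬 G) :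
    upperExp 𝒬 (fun ω => F ω ^ p * G ω ^ q) ≤ upperExp 𝒬 F ^ p * upperExp 𝒬 G ^ q :=
  csSup_le (h𝒬.image _) <| Set.forall_mem_image.mpr fun _ hP =>
    integral_rpow_mul_rpow_le_upperExp hp hq hpq hF₀ hG₀ hF hG hP

end UpperExpectation

theorem mul_rpow_rpow_mul_rpow_rpow {x y p q s t : ℝ} (hx : 0 ≤ x) (hy : 0 ≤ y)
    (hp : 0 ≤ p) (hq : 0 ≤ q) (hs : 0 ≤ s) (ht : 0 ≤ t) :
    (x * y ^ s) ^ p * (y ^ t) ^ q = x ^ p * y ^ (s * p + t * q) := by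
  rw [Real.mul_rpow hx (Real.rpow_nonneg hy s), ← Real.rpow_mul hy, ← Real.rpow_mul hy,
    mul_assoc, ← Real.rpow_add_of_nonneg hy (mul_nonneg hs hp) (mul_nonneg ht hq)]

theorem upperExp_mixed_moment_bound_general {Ω : Type*} [MeasurableSpace Ω]
    {𝒬 : Set (Measure Ω)} (h𝒬 : 𝒬.Nonempty) {X Y : Ω → ℝ} {p q s t u a : ℝ}
    (hp : 0 ≤ p) (hq : 0 ≤ q) (hpq : p + q = 1) (hs : 0 ≤ s) (ht : 0 ≤ t)
    (hu : s * p + t * q = u)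
    (hXY : HasFiniteUpperExp 𝒬 (fun ω => |X ω| * |Y ω| ^ s))
    (hY : HasFiniteUpperExp 𝒬 (fun ω => |Y ω| ^ t))
    (ha : upperExp 𝒬 (fun ω => |Y ω| ^ t) ≤ a) :
    HasFiniteUpperExp 𝒬 (fun ω => |X ω| ^ p * |Y ω| ^ u) ∧
      upperExp 𝒬 (fun ω => |X ω| ^ p * |Y ω| ^ u) ≤
        a ^ q * upperExp 𝒬 (fun ω => |X ω| * |Y ω| ^ s) ^ p := by
  have hXY₀ : 0 ≤ fun ω => |X ω| * |Y ω| ^ s := fun ω => by positivity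
  have hY₀ : 0 ≤ fun ω => |Y ω| ^ t := fun ω => by positivity
  have hfactor : (fun ω => |X ω| ^ p * |Y ω| ^ u) =
      fun ω => (|X ω| * |Y ω| ^ s) ^ p * (|Y ω| ^ t) ^ q := by
    funext ω
    rw [mul_rpow_rpow_mul_rpow_rpow (abs_nonneg _) (abs_nonneg _) hp hq hs ht, hu]
  rw [hfactor, mul_comm (a ^ q)]
  have hEXY : 0 ≤ upperExp 𝒬 (fun ω => |X ω| * |Y ω| ^ s) := upperExp_nonneg_s16 hXY₀
  have hEY : 0 ≤ upperExp 𝒬 (fun ω => |Y ω| ^ t) := upperExp_nonneg_s16 hY₀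
  refine ⟨hXY.rpow_mul_rpow hp hq hpq hXY₀ hY₀ hY,
    (upperExp_rpow_mul_rpow_le h𝒬 hp hq hpq hXY₀ hY₀ hXY hY).trans ?_⟩
  gcongr

theorem mixed_moment_exponent_eq {θ γ : ℝ} (hγ : γ ≠ 1) :
    (θ - γ * (θ - 1 + γ)) / (1 - γ) = θ + γ := by
  rw [div_eq_iff (sub_ne_zero.mpr hγ.symm)]
  ring

/-- Inequality (6) of Theorem 3.1: with `r = θ + γ`, `θ ∈ ℕ`, `θ ≥ 2`, `γ ∈ (0,1)`,
if `E̅[|Y|^{(θ - γ(θ-1+γ))/(1-γ)}] ≤ a` then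
`E̅[|X|^γ |Y|^θ] ≤ a^{1-γ} (E̅[|X| |Y|^{θ-1+γ}])^γ`. -/
theorem upperExp_mixed_moment_bound {Ω : Type*} [MeasurableSpace Ω]
    (𝒬 : Set (Measure Ω)) (h𝒬 : 𝒬.Nonempty)
    (hprob : ∀ P ∈ 𝒬, IsProbabilityMeasure P)
    (θ : ℕ) (hθ : 2 ≤ θ) (γ : ℝ) (hγ0 : 0 < γ) (hγ1 : γ < 1)
    (r : ℝ) (hrθγ : r = (θ : ℝ) + γ)
    (X Y : Ω → ℝ) (hX : Measurable X) (hY : Measurable Y)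
    (hfin₁ : HasFiniteUpperExp 𝒬 (fun ω => |X ω| * |Y ω| ^ ((θ : ℝ) - 1 + γ)))
    (hfin₂ : HasFiniteUpperExp 𝒬
      (fun ω => |Y ω| ^ (((θ : ℝ) - γ * ((θ : ℝ) - 1 + γ)) / (1 - γ))))
    (hfin₃ : HasFiniteUpperExp 𝒬 (fun ω => |Y ω| ^ r))
    (hfin₄ : HasFiniteUpperExp 𝒬 (fun ω => |X ω| ^ γ * |Y ω| ^ (θ : ℝ)))
    (a : ℝ) (ha0 : 0 ≤ a)
    (ha : upperExp 𝒬
      (fun ω => |Y ω| ^ (((θ : ℝ) - γ * ((θ : ℝ) - 1 + γ)) / (1 - γ))) ≤ a) :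
    upperExp 𝒬 (fun ω => |X ω| ^ γ * |Y ω| ^ (θ : ℝ)) ≤
      a ^ (1 - γ) *
        (upperExp 𝒬 (fun ω => |X ω| * |Y ω| ^ ((θ : ℝ) - 1 + γ))) ^ γ := by
  rw [mixed_moment_exponent_eq hγ1.ne] at hfin₂ ha
  have hθ' : (2 : ℝ) ≤ θ := by exact_mod_cast hθ
  exact (upperExp_mixed_moment_bound_general h𝒬 hγ0.le (by linarith) (by ring) (by linarith)
    (by positivity) (by ring) hfin₁ hfin₂ ha).2
end
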